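/- arXiv:1803.05975 — 5 statements merged into one kernel-verified Lean document; each statement's English description precedes it below -/
import Mathlib

section
/- Let g : ℝⁿ → ℝ be a differentiable convex function, E a real m×n matrix and q ∈ ℝᵐ. If z₁ = (x₁, ν₁) and z₂ = (x₂, ν₂) are two differentiable solutions of the primal-dual dynamics on an interval, then for every t, (d/dt)‖z₁(t) − z₂(t)‖₂² = −2⟨x₁(t) − x₂(t), ∇g(x₁(t)) − ∇g(x₂(t))⟩ ≤ 0; in particular t ↦ ‖z₁(t) − z₂(t)‖₂ is non-increasing. -/
open Matrix

theorem aux_mono {n : ℕ} (g : (Fin n → ℝ) → ℝ) (G : (Fin n → ℝ) → (Fin n → ℝ))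
    (hg_diff : Differentiable ℝ g)
    (hg_grad : ∀ x v, fderiv ℝ g x v = G x ⬝ᵥ v)
    (hg_conv : ConvexOn ℝ Set.univ g) (x y : Fin n → ℝ) :
    0 ≤ (x - y) ⬝ᵥ (G x - G y) := by
  have hc : ConvexOn ℝ Set.univ (g ∘ (AffineMap.lineMap y x : ℝ →ᵃ[ℝ] (Fin n → ℝ))) := by
    simpa using hg_conv.comp_affineMap (AffineMap.lineMap y x : ℝ →ᵃ[ℝ] (Fin n → ℝ))
  have hd : ∀ s : ℝ, HasDerivAt (g ∘ (AffineMap.lineMap y x : ℝ →ᵃ[ℝ] (Fin n → ℝ)))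
      (G (AffineMap.lineMap y x s) ⬝ᵥ (x - y)) s := by
    intro s
    rw [← hg_grad]
    exact (hg_diff _).hasFDerivAt.comp_hasDerivAt s AffineMap.hasDerivAt_lineMap
  have h0 := hc.le_slope_of_hasDerivAt (Set.mem_univ 0) (Set.mem_univ 1) one_pos (hd 0)
  have h1 := hc.slope_le_of_hasDerivAt (Set.mem_univ 0) (Set.mem_univ 1) one_pos (hd 1)
  have h2 := h0.trans h1
  simp only [AffineMap.lineMap_apply_zero, AffineMap.lineMap_apply_one] at h2
  rw [dotProduct_comm, sub_dotProduct]
  linarith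

theorem aux_deriv {k : ℕ} (u : ℝ → Fin k → ℝ) (u' : Fin k → ℝ) (t : ℝ)
    (h : HasDerivAt u u' t) :
    HasDerivAt (fun s => u s ⬝ᵥ u s) (2 * (u t ⬝ᵥ u')) t := by
  rw [hasDerivAt_pi] at h
  have := HasDerivAt.fun_sum (u := Finset.univ) (fun i _ => (h i).mul (h i))
  refine this.congr_deriv ?_
  simp only [dotProduct, Finset.mul_sum]
  exact Finset.sum_congr rfl fun i _ => by ring

/-- For a differentiable convex objective `g` with gradient `G`
(`fderiv ℝ g x v = G x ⬝ᵥ v`), any two solutions `z₁ = (x₁, ν₁)`, `z₂ = (x₂, ν₂)` of the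
primal-dual dynamics `ẋ = -∇g(x) - Eᵀν`, `ν̇ = Ex - q` satisfy
`(d/dt)‖z₁ - z₂‖₂² = -2⟨x₁ - x₂, ∇g(x₁) - ∇g(x₂)⟩ ≤ 0`, and `t ↦ ‖z₁(t) - z₂(t)‖₂` is
non-increasing. -/
theorem stmt0 {n m : ℕ} (g : (Fin n → ℝ) → ℝ) (G : (Fin n → ℝ) → (Fin n → ℝ))
    (hg_diff : Differentiable ℝ g)
    (hg_grad : ∀ x v, fderiv ℝ g x v = G x ⬝ᵥ v)
    (hg_conv : ConvexOn ℝ Set.univ g)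
    (E : Matrix (Fin m) (Fin n) ℝ) (q : Fin m → ℝ)
    (x₁ x₂ : ℝ → Fin n → ℝ) (ν₁ ν₂ : ℝ → Fin m → ℝ)
    (h₁x : ∀ t, HasDerivAt x₁ (-(G (x₁ t)) - Eᵀ *ᵥ ν₁ t) t)
    (h₁ν : ∀ t, HasDerivAt ν₁ (E *ᵥ x₁ t - q) t)
    (h₂x : ∀ t, HasDerivAt x₂ (-(G (x₂ t)) - Eᵀ *ᵥ ν₂ t) t)
    (h₂ν : ∀ t, HasDerivAt ν₂ (E *ᵥ x₂ t - q) t) :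
    (∀ t : ℝ,
      HasDerivAt
        (fun s => (x₁ s - x₂ s) ⬝ᵥ (x₁ s - x₂ s) + (ν₁ s - ν₂ s) ⬝ᵥ (ν₁ s - ν₂ s))
        (-2 * ((x₁ t - x₂ t) ⬝ᵥ (G (x₁ t) - G (x₂ t)))) t ∧
      -2 * ((x₁ t - x₂ t) ⬝ᵥ (G (x₁ t) - G (x₂ t))) ≤ 0) ∧
    Antitone (fun t =>
      Real.sqrt ((x₁ t - x₂ t) ⬝ᵥ (x₁ t - x₂ t) + (ν₁ t - ν₂ t) ⬝ᵥ (ν₁ t - ν₂ t))) := by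
  have key : ∀ t : ℝ,
      HasDerivAt
        (fun s => (x₁ s - x₂ s) ⬝ᵥ (x₁ s - x₂ s) + (ν₁ s - ν₂ s) ⬝ᵥ (ν₁ s - ν₂ s))
        (-2 * ((x₁ t - x₂ t) ⬝ᵥ (G (x₁ t) - G (x₂ t)))) t ∧
      -2 * ((x₁ t - x₂ t) ⬝ᵥ (G (x₁ t) - G (x₂ t))) ≤ 0 := by
    intro t
    refine ⟨?_, by linarith [aux_mono g G hg_diff hg_grad hg_conv (x₁ t) (x₂ t)]⟩
    have hx := aux_deriv _ _ t ((h₁x t).sub (h₂x t))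
    have hν := aux_deriv _ _ t ((h₁ν t).sub (h₂ν t))
    refine (hx.add hν).congr_deriv ?_
    have e1 : -(G (x₁ t)) - Eᵀ *ᵥ ν₁ t - (-(G (x₂ t)) - Eᵀ *ᵥ ν₂ t)
        = -(G (x₁ t) - G (x₂ t)) - Eᵀ *ᵥ (ν₁ t - ν₂ t) := by
      rw [mulVec_sub]; abel
    have e2 : E *ᵥ x₁ t - q - (E *ᵥ x₂ t - q) = E *ᵥ (x₁ t - x₂ t) := by
      rw [mulVec_sub]; abel
    have e3 : (x₁ t - x₂ t) ⬝ᵥ (Eᵀ *ᵥ (ν₁ t - ν₂ t))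
        = (ν₁ t - ν₂ t) ⬝ᵥ (E *ᵥ (x₁ t - x₂ t)) := by
      rw [mulVec_transpose, dotProduct_comm, dotProduct_mulVec]
    rw [e1, e2]
    simp only [Pi.sub_apply]
    rw [dotProduct_sub, dotProduct_neg, e3]
    ring
  refine ⟨key, ?_⟩
  have ha := antitone_of_hasDerivAt_nonpos (fun t => (key t).1) (fun t => (key t).2)
  exact fun a b hab => Real.sqrt_le_sqrt (ha hab)
end

section
/- Let g : ℝⁿ → ℝ be a differentiable convex function, E a real m×n matrix, q ∈ ℝᵐ, and let z* = (x*, ν*) be an equilibrium of the primal-dual dynamics, i.e. ∇g(x*) + Eᵀν* = 0 and Ex* = q. Then for every solution z(t) = (x(t), ν(t)) of the primal-dual dynamics, the distance t ↦ ‖z(t) − z*‖₂ is non-increasing. -/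
open Matrix

theorem grad_ineq_aux {n : ℕ} (g : (Fin n → ℝ) → ℝ) (G : (Fin n → ℝ) → (Fin n → ℝ))
    (hg_diff : Differentiable ℝ g)
    (hg_grad : ∀ x v, fderiv ℝ g x v = G x ⬝ᵥ v)
    (hg_conv : ConvexOn ℝ Set.univ g) (a b : Fin n → ℝ) :
    G a ⬝ᵥ (b - a) ≤ g b - g a := by
  have hc : ConvexOn ℝ Set.univ (g ∘ (AffineMap.lineMap a b : ℝ →ᵃ[ℝ] (Fin n → ℝ))) := by
    simpa using hg_conv.comp_affineMap (AffineMap.lineMap a b : ℝ →ᵃ[ℝ] (Fin n → ℝ))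
  have hd : HasDerivAt (g ∘ (AffineMap.lineMap a b : ℝ →ᵃ[ℝ] (Fin n → ℝ)))
      (G a ⬝ᵥ (b - a)) 0 := by
    rw [← hg_grad]
    have h1 : HasDerivAt (AffineMap.lineMap a b : ℝ →ᵃ[ℝ] (Fin n → ℝ)) (b - a) (0:ℝ) :=
      AffineMap.hasDerivAt_lineMap
    have h2 := (hg_diff a).hasFDerivAt
    refine HasFDerivAt.comp_hasDerivAt (0:ℝ) ?_ h1
    simpa using h2
  have := hc.le_slope_of_hasDerivAt (Set.mem_univ 0) (Set.mem_univ 1) one_pos hd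
  simpa [slope_def_field] using this

theorem hasDerivAt_dot_aux {n : ℕ} (x : ℝ → Fin n → ℝ) (x' xs : Fin n → ℝ) (t : ℝ)
    (h : HasDerivAt x x' t) :
    HasDerivAt (fun t => (x t - xs) ⬝ᵥ (x t - xs)) (2 * ((x t - xs) ⬝ᵥ x')) t := by
  rw [hasDerivAt_pi] at h
  have : ∀ i ∈ Finset.univ, HasDerivAt (fun t => (x t i - xs i) * (x t i - xs i))
      (2 * ((x t i - xs i) * x' i)) t := by
    intro i _
    have := ((h i).sub_const (xs i)).mul ((h i).sub_const (xs i))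
    exact this.congr_deriv (by ring)
  have := HasDerivAt.fun_sum this
  simpa [dotProduct, Finset.mul_sum] using this

/-- If `z* = (x*, ν*)` is an equilibrium of the primal-dual dynamics
(`∇g(x*) + Eᵀν* = 0`, `Ex* = q`) for a differentiable convex `g`, then along any solution
`z(t) = (x(t), ν(t))` of the primal-dual dynamics the distance `t ↦ ‖z(t) - z*‖₂` is
non-increasing. -/
theorem stmt1 {n m : ℕ} (g : (Fin n → ℝ) → ℝ) (G : (Fin n → ℝ) → (Fin n → ℝ))
    (hg_diff : Differentiable ℝ g)
    (hg_grad : ∀ x v, fderiv ℝ g x v = G x ⬝ᵥ v)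
    (hg_conv : ConvexOn ℝ Set.univ g)
    (E : Matrix (Fin m) (Fin n) ℝ) (q : Fin m → ℝ)
    (xs : Fin n → ℝ) (νs : Fin m → ℝ)
    (heq1 : G xs + Eᵀ *ᵥ νs = 0) (heq2 : E *ᵥ xs = q)
    (x : ℝ → Fin n → ℝ) (ν : ℝ → Fin m → ℝ)
    (hx : ∀ t, HasDerivAt x (-(G (x t)) - Eᵀ *ᵥ ν t) t)
    (hν : ∀ t, HasDerivAt ν (E *ᵥ x t - q) t) :
    Antitone (fun t =>
      Real.sqrt ((x t - xs) ⬝ᵥ (x t - xs) + (ν t - νs) ⬝ᵥ (ν t - νs))) := by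
  refine Real.sqrt_monotone.comp_antitone ?_
  refine antitone_of_hasDerivAt_nonpos (fun t => (hasDerivAt_dot_aux x _ xs t (hx t)).add
    (hasDerivAt_dot_aux ν _ νs t (hν t))) ?_
  intro t
  have h1 := grad_ineq_aux g G hg_diff hg_grad hg_conv (x t) xs
  have h2 := grad_ineq_aux g G hg_diff hg_grad hg_conv xs (x t)
  have h3 : G xs = -(Eᵀ *ᵥ νs) := eq_neg_of_add_eq_zero_left heq1
  have key : ∀ (u : Fin n → ℝ) (w : Fin m → ℝ), u ⬝ᵥ (Eᵀ *ᵥ w) = w ⬝ᵥ (E *ᵥ u) := by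
    intro u w
    rw [mulVec_transpose, dotProduct_comm, dotProduct_mulVec]
  have c1 := dotProduct_comm (G (x t)) (x t)
  have c2 := dotProduct_comm (G (x t)) xs
  rw [h3, neg_dotProduct, dotProduct_comm] at h2
  subst heq2
  simp only [dotProduct_sub, sub_dotProduct, dotProduct_neg, key, mulVec_sub, Pi.zero_apply] at h1 h2 c1 c2 ⊢
  linarith
end

section
/- Let H be a symmetric positive definite n×n real matrix and E a real m×n matrix. If 0 < α < 1/(‖EH^{−1/2}‖₂² + ‖H‖₂/4), where ‖·‖₂ denotes the spectral norm and H^{−1/2} is the inverse of the positive definite square root of H, then the matrix H − αEᵀE − (α/4)H² is symmetric positive definite. -/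
open Matrix
open scoped MatrixOrder

/-- The spectral (operator 2-)norm of a real matrix. -/
noncomputable def spectralNorm2 {m n : ℕ} (E : Matrix (Fin m) (Fin n) ℝ) : ℝ :=
  ‖LinearMap.toContinuousLinearMap (Matrix.toEuclideanLin E)‖

lemma aux_norm {m n : ℕ} (A : Matrix (Fin m) (Fin n) ℝ) (v : Fin n → ℝ) :
    ‖WithLp.toLp 2 (A *ᵥ v)‖ ≤ spectralNorm2 A * ‖WithLp.toLp 2 v‖ := by
  have := (LinearMap.toContinuousLinearMap (Matrix.toEuclideanLin A)).le_opNorm (WithLp.toLp 2 v)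
  simpa [spectralNorm2] using this

lemma aux_dot {n : ℕ} (v : Fin n → ℝ) : v ⬝ᵥ v = ‖WithLp.toLp 2 v‖ ^ 2 := by
  rw [EuclideanSpace.norm_sq_eq]
  simp [dotProduct, sq]

lemma aux_sq {m n : ℕ} (A : Matrix (Fin m) (Fin n) ℝ) (v : Fin n → ℝ) :
    (A *ᵥ v) ⬝ᵥ (A *ᵥ v) ≤ spectralNorm2 A ^ 2 * (v ⬝ᵥ v) := by
  rw [aux_dot, aux_dot, ← mul_pow]
  exact pow_le_pow_left₀ (norm_nonneg _) (aux_norm A v) 2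

lemma aux_quad {n : ℕ} (A : Matrix (Fin n) (Fin n) ℝ) (v : Fin n → ℝ) :
    v ⬝ᵥ (A *ᵥ v) ≤ spectralNorm2 A * (v ⬝ᵥ v) := by
  have h1 := real_inner_le_norm (WithLp.toLp 2 (A *ᵥ v)) (WithLp.toLp 2 v)
  have h2 : inner ℝ (WithLp.toLp 2 (A *ᵥ v)) (WithLp.toLp 2 v) = v ⬝ᵥ (A *ᵥ v) := by
    simp [EuclideanSpace.inner_eq_star_dotProduct]
  rw [h2] at h1
  rw [aux_dot v]
  nlinarith [aux_norm A v, norm_nonneg (WithLp.toLp 2 v)]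

theorem stmt3 {n m : ℕ} (H : Matrix (Fin n) (Fin n) ℝ) (hH : H.PosDef)
    (E : Matrix (Fin m) (Fin n) ℝ) (α : ℝ) (hα0 : 0 < α)
    (hα : α < 1 / (spectralNorm2 (E * (CFC.sqrt H)⁻¹) ^ 2 + spectralNorm2 H / 4)) :
    (H - α • (Eᵀ * E) - (α / 4) • (H * H)).PosDef := by
  have hHt : Hᵀ = H := by simpa using hH.isHermitian.eq
  have hSS : CFC.sqrt H * CFC.sqrt H = H := CFC.sqrt_mul_sqrt_self H hH.posSemidef.nonneg
  have hSt : (CFC.sqrt H)ᵀ = CFC.sqrt H := by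
    simpa using (Matrix.nonneg_iff_posSemidef.mp (CFC.sqrt_nonneg H)).isHermitian.eq
  generalize CFC.sqrt H = S at *
  have hdet : IsUnit S.det := by
    have h := hH.det_pos.ne'
    rw [← hSS, det_mul] at h
    exact (left_ne_zero_of_mul h).isUnit
  have hD : 0 < spectralNorm2 (E * S⁻¹) ^ 2 + spectralNorm2 H / 4 := by
    by_contra h
    have := one_div_nonpos.mpr (not_lt.mp h)
    linarith
  rw [lt_div_iff₀ hD] at hα
  have key : ∀ (k : ℕ) (A : Matrix (Fin k) (Fin n) ℝ) (v : Fin n → ℝ),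
      v ⬝ᵥ ((Aᵀ * A) *ᵥ v) = (A *ᵥ v) ⬝ᵥ (A *ᵥ v) := by
    intro k A v
    rw [← mulVec_mulVec, dotProduct_mulVec, vecMul_transpose]
  refine Matrix.PosDef.of_dotProduct_mulVec_pos ?_ ?_
  · simp [Matrix.IsHermitian, hHt]
  · intro x hx
    have hpos := hH.dotProduct_mulVec_pos hx
    simp only [star_trivial] at hpos ⊢
    have e1 : x ⬝ᵥ (H *ᵥ x) = (S *ᵥ x) ⬝ᵥ (S *ᵥ x) := by
      rw [← key, hSt, hSS]
    have e2 : x ⬝ᵥ ((H * H) *ᵥ x) = (S *ᵥ x) ⬝ᵥ (H *ᵥ (S *ᵥ x)) := by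
      rw [← vecMul_transpose S x, ← dotProduct_mulVec, vecMul_transpose, hSt, mulVec_mulVec,
        mulVec_mulVec, ← hSS]
      simp only [Matrix.mul_assoc]
    have e3 : E *ᵥ x = (E * S⁻¹) *ᵥ (S *ᵥ x) := by
      rw [mulVec_mulVec, Matrix.mul_assoc, Matrix.nonsing_inv_mul _ hdet, Matrix.mul_one]
    have i1 := aux_sq (E * S⁻¹) (S *ᵥ x)
    have i2 := aux_quad H (S *ᵥ x)
    rw [sub_mulVec, sub_mulVec, smul_mulVec, smul_mulVec, dotProduct_sub, dotProduct_sub,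
      dotProduct_smul, dotProduct_smul, key, e3, e2, e1, smul_eq_mul, smul_eq_mul]
    rw [e1] at hpos
    have j1 := mul_le_mul_of_nonneg_left i1 hα0.le
    have j2 := mul_le_mul_of_nonneg_left i2 (by positivity : 0 ≤ α / 4)
    have j3 := mul_lt_mul_of_pos_right hα hpos
    linarith
end

section
/- Let g(x) = (1/2)xᵀHx + cᵀx with H symmetric positive definite, E a real m×n matrix, q ∈ ℝᵐ, and 0 < α < 1/‖E‖₂. Let z₁ and z₂ be two differentiable solutions of the primal-dual dynamics ẋ = −Hx − c − Eᵀν, ν̇ = Ex − q, and write δx(t) = x₁(t) − x₂(t), δν(t) = ν₁(t) − ν₂(t). Then for every t, (d/dt)[‖δx + αEᵀδν‖₂² + δνᵀ(I − α²EEᵀ)δν] = −2 δxᵀ(H − αEᵀE − (α/4)H²)δx − 2α‖Eᵀδν + (1/2)Hδx‖₂². -/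
open Matrix

theorem hda_dot {k : ℕ} {u v : ℝ → Fin k → ℝ} {u' v' : Fin k → ℝ} {t : ℝ}
    (hu : HasDerivAt u u' t) (hv : HasDerivAt v v' t) :
    HasDerivAt (fun s => u s ⬝ᵥ v s) (u' ⬝ᵥ v t + u t ⬝ᵥ v') t := by
  rw [hasDerivAt_pi] at hu hv
  have h := HasDerivAt.fun_sum (u := Finset.univ) (fun i _ => (hu i).mul (hv i))
  simp only [dotProduct, ← Finset.sum_add_distrib]
  exact h

theorem hda_mulVec {k l : ℕ} (A : Matrix (Fin k) (Fin l) ℝ) {v : ℝ → Fin l → ℝ}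
    {v' : Fin l → ℝ} {t : ℝ} (hv : HasDerivAt v v' t) :
    HasDerivAt (fun s => A *ᵥ v s) (A *ᵥ v') t := by
  rw [hasDerivAt_pi]
  intro i
  have h := hda_dot (hasDerivAt_const t (A i)) hv
  simpa [mulVec] using h

/-- For the quadratic objective `g(x) = (1/2)xᵀHx + cᵀx` (so
`∇g(x) = Hx + c`), `H` symmetric positive definite, and `0 < α < 1/‖E‖₂`, any two
solutions of the primal-dual dynamics satisfy, with `δx = x₁ - x₂`, `δν = ν₁ - ν₂`,
`(d/dt)[‖δx + αEᵀδν‖₂² + δνᵀ(I - α²EEᵀ)δν]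
  = -2 δxᵀ(H - αEᵀE - (α/4)H²)δx - 2α‖Eᵀδν + (1/2)Hδx‖₂²`. -/
theorem stmt6 {n m : ℕ} (H : Matrix (Fin n) (Fin n) ℝ) (hH : H.PosDef)
    (c : Fin n → ℝ) (E : Matrix (Fin m) (Fin n) ℝ) (q : Fin m → ℝ)
    (α : ℝ) (hα0 : 0 < α) (hα : α < 1 / spectralNorm2 E)
    (x₁ x₂ : ℝ → Fin n → ℝ) (ν₁ ν₂ : ℝ → Fin m → ℝ)
    (h₁x : ∀ t, HasDerivAt x₁ (-(H *ᵥ x₁ t) - c - Eᵀ *ᵥ ν₁ t) t)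
    (h₁ν : ∀ t, HasDerivAt ν₁ (E *ᵥ x₁ t - q) t)
    (h₂x : ∀ t, HasDerivAt x₂ (-(H *ᵥ x₂ t) - c - Eᵀ *ᵥ ν₂ t) t)
    (h₂ν : ∀ t, HasDerivAt ν₂ (E *ᵥ x₂ t - q) t) :
    ∀ t : ℝ,
      HasDerivAt
        (fun s =>
          ((x₁ s - x₂ s) + α • (Eᵀ *ᵥ (ν₁ s - ν₂ s))) ⬝ᵥ
              ((x₁ s - x₂ s) + α • (Eᵀ *ᵥ (ν₁ s - ν₂ s))) +
            (ν₁ s - ν₂ s) ⬝ᵥ ((1 - α ^ 2 • (E * Eᵀ)) *ᵥ (ν₁ s - ν₂ s)))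
        (-2 * ((x₁ t - x₂ t) ⬝ᵥ ((H - α • (Eᵀ * E) - (α / 4) • (H * H)) *ᵥ (x₁ t - x₂ t)))
          - 2 * α * ((Eᵀ *ᵥ (ν₁ t - ν₂ t) + (1 / 2 : ℝ) • (H *ᵥ (x₁ t - x₂ t))) ⬝ᵥ
              (Eᵀ *ᵥ (ν₁ t - ν₂ t) + (1 / 2 : ℝ) • (H *ᵥ (x₁ t - x₂ t))))) t := by
  intro t
  have hd : HasDerivAt (fun s => x₁ s - x₂ s)
      (-(H *ᵥ (x₁ t - x₂ t)) - Eᵀ *ᵥ (ν₁ t - ν₂ t)) t := by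
    refine ((h₁x t).sub (h₂x t)).congr_deriv ?_
    rw [mulVec_sub, mulVec_sub]; abel
  have hv : HasDerivAt (fun s => ν₁ s - ν₂ s) (E *ᵥ (x₁ t - x₂ t)) t := by
    refine ((h₁ν t).sub (h₂ν t)).congr_deriv ?_
    rw [mulVec_sub]; abel
  have hE : ∀ (a : Fin m → ℝ) (b : Fin n → ℝ), a ⬝ᵥ (E *ᵥ b) = (Eᵀ *ᵥ a) ⬝ᵥ b := by
    intro a b
    rw [dotProduct_mulVec, mulVec_transpose]
  have hHt : Hᵀ = H := by simpa using hH.isHermitian.eq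
  have hHs : ∀ a b : Fin n → ℝ, a ⬝ᵥ (H *ᵥ b) = (H *ᵥ a) ⬝ᵥ b := by
    intro a b
    rw [dotProduct_mulVec, ← mulVec_transpose, hHt]
  generalize hdd : (fun s => x₁ s - x₂ s) = d at hd
  generalize hvv : (fun s => ν₁ s - ν₂ s) = v at hv
  have e1 : ∀ s, x₁ s - x₂ s = d s := fun s => congrFun hdd s
  have e2 : ∀ s, ν₁ s - ν₂ s = v s := fun s => congrFun hvv s
  simp only [e1, e2] at hd hv ⊢
  have hw := hda_mulVec Eᵀ hv
  have key := ((hda_dot hd hd).add ((hda_dot hd hw).const_mul (2 * α))).add (hda_dot hv hv)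
  refine (key.congr_of_eventuallyEq (Filter.Eventually.of_forall fun s => ?_)).congr_deriv ?_
  · have c1 := dotProduct_comm (d s) (Eᵀ *ᵥ v s)
    simp only [Pi.add_apply, sub_mulVec, smul_mulVec, one_mulVec, ← mulVec_mulVec,
      dotProduct_sub, dotProduct_smul, dotProduct_add, add_dotProduct, smul_dotProduct,
      smul_eq_mul, hE, c1]
    ring
  · have c1 := dotProduct_comm (d t) (Eᵀ *ᵥ v t)
    have c2 := dotProduct_comm (H *ᵥ d t) (Eᵀ *ᵥ v t)
    have c3 := dotProduct_comm (d t) (H *ᵥ d t)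
    have c4 := hE (v t) (d t)
    have c5 := dotProduct_comm (E *ᵥ d t) (v t)
    have c6 := hHs (d t) (H *ᵥ d t)
    simp only [sub_mulVec, smul_mulVec, ← mulVec_mulVec, sub_dotProduct, neg_dotProduct,
      dotProduct_neg,
      dotProduct_sub, dotProduct_smul, dotProduct_add, add_dotProduct, smul_dotProduct,
      smul_eq_mul]
    rw [c6, c5, c4, c3, c2, c1]
    ring
end

section
/- (Corollary 1.) Let Θ be an invertible N×N real matrix, β > 0, let f : ℝᴺ × ℝ → ℝᴺ satisfy ⟨Θ(f(a,t) − f(b,t)), Θ(a − b)⟩ ≤ −β‖Θ(a − b)‖₂² for all a, b, t, let z solve ż = f(z, t) and let z* be differentiable with f(z*(t), t) = 0 for all t and M := sup_{t ≥ 0} ‖Θż*(t)‖₂ < ∞. Then for all t ≥ 0, ‖Θ(z(t) − z*(t))‖₂ ≤ e^{−βt}‖Θ(z(0) − z*(0))‖₂ + (M/β)(1 − e^{−βt}); in particular limsup_{t→∞} ‖Θ(z(t) − z*(t))‖₂ ≤ M/β. -/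
open Matrix

theorem aux_cs {N : ℕ} (a b : Fin N → ℝ) :
    a ⬝ᵥ b ≤ Real.sqrt (a ⬝ᵥ a) * Real.sqrt (b ⬝ᵥ b) := by
  have h := Real.sum_mul_le_sqrt_mul_sqrt Finset.univ a b
  simpa [dotProduct, sq] using h

theorem aux_gron (β M : ℝ) (hβ : 0 < β) (hM0 : 0 ≤ M) (V V' : ℝ → ℝ)
    (hV0 : ∀ t, 0 ≤ V t)
    (hV : ∀ t, HasDerivAt V (V' t) t)
    (hb : ∀ t, 0 ≤ t → V' t ≤ -2 * β * V t + 2 * M * Real.sqrt (V t)) (t : ℝ) (ht : 0 ≤ t) :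
    Real.sqrt (V t) ≤ Real.exp (-β * t) * Real.sqrt (V 0) + (M / β) * (1 - Real.exp (-β * t)) := by
  have key : ∀ ε : ℝ, 0 < ε → Real.sqrt (V t) ≤
      Real.exp (-β * t) * (Real.sqrt (V 0) + ε) + ((M + ε) / β) * (1 - Real.exp (-β * t)) := by
    intro ε hε
    set B : ℝ → ℝ := fun s =>
      Real.exp (-β * s) * (Real.sqrt (V 0) + ε) + ((M + ε) / β) * (1 - Real.exp (-β * s)) with hB
    have hBpos : ∀ s, 0 ≤ s → 0 < B s := by
      intro s hs
      have h1 : Real.exp (-β * s) ≤ 1 := by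
        apply Real.exp_le_one_iff.mpr
        nlinarith
      have h2 : 0 < Real.exp (-β * s) * (Real.sqrt (V 0) + ε) := by positivity
      have h3 : 0 ≤ ((M + ε) / β) * (1 - Real.exp (-β * s)) :=
        mul_nonneg (by positivity) (by linarith)
      simp only [hB]
      linarith
    have hBd : ∀ s, HasDerivAt B (-β * B s + (M + ε)) s := by
      intro s
      have he : HasDerivAt (fun s : ℝ => Real.exp (-β * s)) (Real.exp (-β * s) * (-β)) s := by
        have := ((hasDerivAt_id s).const_mul (-β)).exp
        simpa using this
      have := (he.mul_const (Real.sqrt (V 0) + ε)).add ((he.const_sub 1).const_mul ((M + ε) / β))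
      refine this.congr_deriv ?_
      simp only [hB]
      field_simp
      ring
    have hB2 : ∀ s, HasDerivAt (fun s => B s ^ 2) (2 * B s * (-β * B s + (M + ε))) s := by
      intro s
      refine ((hBd s).pow 2).congr_deriv ?_
      simp
    have hle : V t ≤ B t ^ 2 := by
      refine image_le_of_deriv_right_lt_deriv_boundary (f := V) (f' := V') (a := 0) (b := t)
        (B := fun s => B s ^ 2) (fun x _ => (hV x).continuousAt.continuousWithinAt)
        (fun x _ => (hV x).hasDerivWithinAt) ?_ hB2 ?_ ⟨ht, le_refl t⟩
      · have hb0 : B 0 = Real.sqrt (V 0) + ε := by simp [hB]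
        simp only [hb0]
        nlinarith [Real.sq_sqrt (hV0 0), Real.sqrt_nonneg (V 0)]
      · intro x hx hVx
        have hp := hBpos x hx.1
        have h := hb x hx.1
        rw [hVx, Real.sqrt_sq hp.le] at h
        nlinarith [mul_pos hε hp]
    exact (Real.sqrt_le_sqrt hle).trans (Real.sqrt_sq (hBpos t ht).le).le
  have hc : Filter.Tendsto (fun ε : ℝ =>
      Real.exp (-β * t) * (Real.sqrt (V 0) + ε) + ((M + ε) / β) * (1 - Real.exp (-β * t)))
      (nhdsWithin 0 (Set.Ioi 0)) (nhds (Real.exp (-β * t) * (Real.sqrt (V 0) + 0)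
        + ((M + 0) / β) * (1 - Real.exp (-β * t)))) := by
    apply tendsto_nhdsWithin_of_tendsto_nhds
    apply Continuous.tendsto (f := fun ε : ℝ =>
      Real.exp (-β * t) * (Real.sqrt (V 0) + ε) + ((M + ε) / β) * (1 - Real.exp (-β * t)))
    fun_prop
  have := ge_of_tendsto hc (by filter_upwards [self_mem_nhdsWithin] with ε hε using key ε hε)
  simpa using this

/-- **Corollary 1.** If `f` is `β`-contracting in the constant metric `Θ`,
`z` solves `ż = f(z,t)`, `z*` is a differentiable curve of instantaneous optima
(`f(z*(t),t) = 0`) whose speed in the metric is bounded by `M = sup_{t≥0} ‖Θż*‖₂ < ∞`,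
then for all `t ≥ 0`,
`‖Θ(z(t) - z*(t))‖₂ ≤ e^{-βt}‖Θ(z(0) - z*(0))‖₂ + (M/β)(1 - e^{-βt})`;
in particular `limsup_{t→∞} ‖Θ(z(t) - z*(t))‖₂ ≤ M/β`. -/
theorem stmt9 {N : ℕ} (Θ : Matrix (Fin N) (Fin N) ℝ) (hΘ : IsUnit Θ)
    (β : ℝ) (hβ : 0 < β)
    (f : (Fin N → ℝ) → ℝ → (Fin N → ℝ))
    (hf : ∀ (a b : Fin N → ℝ) (t : ℝ),
      (Θ *ᵥ (f a t - f b t)) ⬝ᵥ (Θ *ᵥ (a - b)) ≤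
        -β * ((Θ *ᵥ (a - b)) ⬝ᵥ (Θ *ᵥ (a - b))))
    (z zs zs' : ℝ → Fin N → ℝ)
    (hz : ∀ t, HasDerivAt z (f (z t) t) t)
    (hzs : ∀ t, HasDerivAt zs (zs' t) t)
    (hopt : ∀ t, f (zs t) t = 0)
    (M : ℝ) (hM : ∀ t : ℝ, 0 ≤ t → Real.sqrt ((Θ *ᵥ zs' t) ⬝ᵥ (Θ *ᵥ zs' t)) ≤ M) :
    (∀ t : ℝ, 0 ≤ t →
      Real.sqrt ((Θ *ᵥ (z t - zs t)) ⬝ᵥ (Θ *ᵥ (z t - zs t))) ≤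
        Real.exp (-β * t) * Real.sqrt ((Θ *ᵥ (z 0 - zs 0)) ⬝ᵥ (Θ *ᵥ (z 0 - zs 0))) +
          (M / β) * (1 - Real.exp (-β * t))) ∧
    Filter.limsup (fun t => Real.sqrt ((Θ *ᵥ (z t - zs t)) ⬝ᵥ (Θ *ᵥ (z t - zs t))))
        Filter.atTop ≤ M / β := by
  have hM0 : 0 ≤ M := (Real.sqrt_nonneg _).trans (hM 0 le_rfl)
  have hnn : ∀ v : Fin N → ℝ, 0 ≤ v ⬝ᵥ v := fun v =>
    Finset.sum_nonneg fun i _ => mul_self_nonneg _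
  have hw : ∀ t, HasDerivAt (fun t => Θ *ᵥ (z t - zs t)) (Θ *ᵥ (f (z t) t - zs' t)) t := by
    intro t
    exact ((Matrix.mulVecLin Θ).toContinuousLinearMap.hasFDerivAt.comp_hasDerivAt t
      ((hz t).sub (hzs t)))
  have hV : ∀ t, HasDerivAt (fun t => (Θ *ᵥ (z t - zs t)) ⬝ᵥ (Θ *ᵥ (z t - zs t)))
      (2 * ((Θ *ᵥ (f (z t) t - zs' t)) ⬝ᵥ (Θ *ᵥ (z t - zs t)))) t := by
    intro t
    have h := hasDerivAt_pi.1 (hw t)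
    have h2 := HasDerivAt.fun_sum (u := Finset.univ) fun i _ => (h i).mul (h i)
    refine h2.congr_deriv ?_
    rw [dotProduct, Finset.mul_sum]
    refine Finset.sum_congr rfl fun i _ => ?_
    ring
  have main := aux_gron β M hβ hM0 _ _ (fun t => hnn (Θ *ᵥ (z t - zs t))) hV (by
    intro t ht
    have h1 := hf (z t) (zs t) t
    rw [hopt t, sub_zero] at h1
    have h2 := aux_cs (-(Θ *ᵥ zs' t)) (Θ *ᵥ (z t - zs t))
    rw [neg_dotProduct_neg, neg_dotProduct] at h2
    have h3 := mul_le_mul_of_nonneg_right (hM t ht)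
      (Real.sqrt_nonneg ((Θ *ᵥ (z t - zs t)) ⬝ᵥ (Θ *ᵥ (z t - zs t))))
    rw [Matrix.mulVec_sub Θ (f (z t) t), sub_dotProduct]
    linarith)
  refine ⟨main, ?_⟩
  have he : Filter.Tendsto (fun t : ℝ => Real.exp (-β * t)) Filter.atTop (nhds 0) := by
    apply Real.tendsto_exp_atBot.comp
    exact Filter.tendsto_id.const_mul_atTop_of_neg (by linarith)
  have hlim : Filter.Tendsto (fun t : ℝ =>
      Real.exp (-β * t) * Real.sqrt ((Θ *ᵥ (z 0 - zs 0)) ⬝ᵥ (Θ *ᵥ (z 0 - zs 0))) +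
          (M / β) * (1 - Real.exp (-β * t))) Filter.atTop (nhds (M / β)) := by
    have := (he.mul_const (Real.sqrt ((Θ *ᵥ (z 0 - zs 0)) ⬝ᵥ (Θ *ᵥ (z 0 - zs 0))))).add
      ((he.const_sub 1).const_mul (M / β))
    simpa using this
  rw [← hlim.limsup_eq]
  refine Filter.limsup_le_limsup ?_ ?_ hlim.isBoundedUnder_le
  · filter_upwards [Filter.eventually_ge_atTop 0] with t ht using main t ht
  · exact Filter.IsCoboundedUnder.of_frequently_ge (a := 0)
      (Filter.Frequently.of_forall fun t => Real.sqrt_nonneg _)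
end
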